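/- arXiv:1804.01357 — 3 statements merged into one kernel-verified Lean document; each statement's English description precedes it below -/
import Mathlib

section
/- Let σ > 0, P_0 > 0, P_1 > 0, π_0 ∈ (0,1), π_1 = 1 − π_0, and cost parameters with C_{10} > C_{00} and C_{01} > C_{11}; set τ = π_0(C_{10} − C_{00})/(π_1(C_{01} − C_{11})). For signal levels S_0 < S_1 with S_0² ≤ P_0 and S_1² ≤ P_1, let d = (S_1 − S_0)/σ and define the team Bayes risk R(S_0, S_1) = π_0 C_{00} + π_1 C_{11} + π_0(C_{10} − C_{00}) Q(ln(τ)/d + d/2) + π_1(C_{01} − C_{11}) Q(d/2 − ln(τ)/d) (the risk when the receiver uses the optimal likelihood-ratio test). Then: (i) R is uniquely minimized over {(S_0,S_1) : S_0² ≤ P_0, S_1² ≤ P_1, S_0 < S_1} at (S_0, S_1) = (−√P_0, √P_1), i.e., at maximal separation; and (ii) the minimum value satisfies R(−√P_0, √P_1) < min(π_0 C_{10} + π_1 C_{11}, π_0 C_{00} + π_1 C_{01}), the risks of the two constant (non-informative) decision rules. -/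
/-- The standard Gaussian tail function `Q(x) = ∫_x^∞ (1/√(2π)) e^{-t²/2} dt`. -/
noncomputable def Q (x : ℝ) : ℝ :=
  ∫ t in Set.Ioi x, (1 / Real.sqrt (2 * Real.pi)) * Real.exp (-t ^ 2 / 2)

noncomputable def gphi (t : ℝ) : ℝ := (1 / Real.sqrt (2 * Real.pi)) * Real.exp (-t ^ 2 / 2)

lemma gphi_pos (t : ℝ) : 0 < gphi t := by unfold gphi; positivity

lemma gphi_cont : Continuous gphi := by unfold gphi; fun_prop

lemma gphi_int : MeasureTheory.Integrable gphi := by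
  have h := (integrable_exp_neg_mul_sq (b := 1/2) (by norm_num)).const_mul
    (1 / Real.sqrt (2 * Real.pi))
  refine h.congr (Filter.Eventually.of_forall fun t => ?_)
  simp only [gphi]
  congr 2; ring

lemma gphi_total : ∫ t, gphi t = 1 := by
  have h := integral_gaussian (1/2)
  have e : ∀ t, gphi t = (1 / Real.sqrt (2 * Real.pi)) * Real.exp (-(1/2) * t ^ 2) := by
    intro t; simp only [gphi]; congr 2; ring
  simp_rw [e]
  rw [MeasureTheory.integral_const_mul, h]
  have : Real.pi / (1/2) = 2 * Real.pi := by ring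
  rw [this]
  have : 0 < Real.sqrt (2 * Real.pi) := by positivity
  field_simp

lemma Q_eq (x : ℝ) : Q x = ∫ t in Set.Ioi x, gphi t := rfl

lemma Q_sub (x : ℝ) : Q x = Q 0 - ∫ t in (0:ℝ)..x, gphi t := by
  have h := intervalIntegral.integral_Ioi_sub_Ioi' (a := 0) (b := x) (μ := MeasureTheory.volume)
    gphi_int.integrableOn gphi_int.integrableOn
  rw [← Q_eq, ← Q_eq] at h
  linarith

lemma Q_deriv (x : ℝ) : HasDerivAt Q (-gphi x) x := by
  have h : HasDerivAt (fun x => ∫ t in (0:ℝ)..x, gphi t) (gphi x) x :=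
    gphi_cont.integral_hasStrictDerivAt 0 x |>.hasDerivAt
  have h2 := h.const_sub (Q 0)
  exact h2.congr_of_eventuallyEq (Filter.Eventually.of_forall Q_sub)

lemma Q_tendsto : Filter.Tendsto Q Filter.atTop (nhds 0) := by
  have h := MeasureTheory.intervalIntegral_tendsto_integral_Ioi (0:ℝ)
    gphi_int.integrableOn Filter.tendsto_id
  have h2 := h.const_sub (Q 0)
  rw [← Q_eq, sub_self] at h2
  exact h2.congr fun x => (Q_sub x).symm

lemma Q_neg (x : ℝ) : Q (-x) = 1 - Q x := by
  have h1 : Q (-x) = ∫ t in Set.Iic x, gphi t := by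
    rw [Q_eq, ← integral_comp_neg_Iic]
    simp [gphi]
  have h2 := intervalIntegral.integral_Iic_add_Ioi (b := x) (μ := MeasureTheory.volume)
    gphi_int.integrableOn gphi_int.integrableOn
  rw [gphi_total, ← h1, ← Q_eq] at h2
  linarith

lemma gphi_rel (a b x y : ℝ) (ha : 0 < a) (hb : 0 < b) :
    a * gphi x < b * gphi y ↔ Real.log (a / b) < (x ^ 2 - y ^ 2) / 2 := by
  have hc : 0 < 1 / Real.sqrt (2 * Real.pi) := by positivity
  have e1 : a * gphi x = 1 / Real.sqrt (2 * Real.pi) * Real.exp (Real.log a + -x^2/2) := by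
    rw [Real.exp_add, Real.exp_log ha]; simp only [gphi]; ring
  have e2 : b * gphi y = 1 / Real.sqrt (2 * Real.pi) * Real.exp (Real.log b + -y^2/2) := by
    rw [Real.exp_add, Real.exp_log hb]; simp only [gphi]; ring
  rw [e1, e2, mul_lt_mul_iff_right₀ hc, Real.exp_lt_exp, Real.log_div ha.ne' hb.ne']
  constructor <;> intro h <;> linarith

lemma risk_anti (a b : ℝ) (ha : 0 < a) (hb : 0 < b) :
    StrictAntiOn (fun d => a * Q (Real.log (a/b) / d + d/2) + b * Q (d/2 - Real.log (a/b) / d))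
      (Set.Ioi 0) := by
  set L := Real.log (a/b) with hL
  have hd : ∀ d ∈ Set.Ioi (0:ℝ), HasDerivAt
      (fun d => a * Q (L / d + d/2) + b * Q (d/2 - L / d)) (-(a * gphi (L/d + d/2))) d := by
    intro d hd
    have hd0 : d ≠ 0 := ne_of_gt hd
    have hl : HasDerivAt (fun d => L / d) (-(L / d^2)) d := by
      have := (hasDerivAt_inv hd0).const_mul L
      have e : (fun d => L / d) = fun y => L * y⁻¹ := by funext y; exact div_eq_mul_inv L y
      rw [e]
      exact this.congr_deriv (by ring)
    have h2 : HasDerivAt (fun d : ℝ => d / 2) (1/2) d := (hasDerivAt_id d).div_const 2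
    have A := ((Q_deriv _).comp d (hl.add h2)).const_mul a
    have B := ((Q_deriv _).comp d (h2.sub hl)).const_mul b
    have key : a * gphi (L/d + d/2) = b * gphi (d/2 - L/d) := by
      have e : ((L/d + d/2)^2 - (d/2 - L/d)^2)/2 = L := by field_simp; ring
      have p := gphi_rel a b (L/d + d/2) (d/2 - L/d) ha hb
      have q := gphi_rel b a (d/2 - L/d) (L/d + d/2) hb ha
      have e' : Real.log (b/a) = -L := by rw [hL, ← Real.log_inv, inv_div]
      apply le_antisymm
      · apply le_of_not_gt; rw [q, e']; intro h; linarith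
      · apply le_of_not_gt; rw [p, ← hL]; intro h; linarith
    refine (A.add B).congr_deriv ?_
    change a * (-gphi (L/d + d/2) * (-(L/d^2) + 1/2)) +
      b * (-gphi (d/2 - L/d) * (1/2 - -(L/d^2))) = _
    linear_combination (1/2 + L/d^2) * key
  apply strictAntiOn_of_deriv_neg (convex_Ioi 0)
  · exact fun d h => (hd d h).continuousAt.continuousWithinAt
  · intro d h
    rw [interior_Ioi] at h
    rw [(hd d h).deriv]
    have := gphi_pos (L/d + d/2)
    have := mul_pos ha this
    linarith

lemma risk_lt (a b d : ℝ) (ha : 0 < a) (hb : 0 < b) (hd : 0 < d) :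
    a * Q (Real.log (a/b) / d + d/2) + b * Q (d/2 - Real.log (a/b) / d) < a := by
  set L := Real.log (a/b) with hL
  set w := -(L/d + d/2) with hw
  have hG : ∀ x, HasDerivAt (fun x => a * Q x - b * Q (x + d))
      (a * (-gphi x) - b * (-gphi (x+d))) x := by
    intro x
    exact ((Q_deriv x).const_mul a).sub (((Q_deriv (x+d)).comp_add_const x d).const_mul b)
  have anti : StrictAntiOn (fun x => a * Q x - b * Q (x + d)) (Set.Ici w) := by
    apply strictAntiOn_of_deriv_neg (convex_Ici w)
    · exact fun x h => (hG x).continuousAt.continuousWithinAt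
    · intro x h
      rw [interior_Ici, Set.mem_Ioi] at h
      rw [(hG x).deriv]
      have := (gphi_rel b a (x+d) x hb ha).2 (by
        have e' : Real.log (b/a) = -L := by rw [hL, ← Real.log_inv, inv_div]
        rw [e']
        have := mul_lt_mul_of_pos_right h hd
        have e : w * d = -L - d^2/2 := by rw [hw]; field_simp; ring
        nlinarith)
      linarith
  have lim : Filter.Tendsto (fun x => a * Q x - b * Q (x + d)) Filter.atTop (nhds 0) := by
    have := (Q_tendsto.const_mul a).sub
      ((Q_tendsto.comp (Filter.tendsto_atTop_add_const_right _ d Filter.tendsto_id)).const_mul b)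
    simpa using this
  have h1 : a * Q (w+1) - b * Q (w + 1 + d) < a * Q w - b * Q (w + d) :=
    anti (by simp) (by simp) (by linarith)
  have h0 : 0 ≤ a * Q (w+1) - b * Q (w + 1 + d) := by
    apply le_of_tendsto lim
    filter_upwards [Filter.eventually_ge_atTop (w+1)] with x hx
    exact anti.antitoneOn (by simp) (Set.mem_Ici.2 (by linarith)) hx
  have e1 : Q w = 1 - Q (L/d + d/2) := Q_neg _
  have e2 : w + d = d/2 - L/d := by rw [hw]; ring
  rw [e1, e2] at h1
  linarith

/-- Team setup: with `τ = π₀(C₁₀-C₀₀)/(π₁(C₀₁-C₁₁))` and the team Bayes risk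
`R(S₀,S₁) = π₀C₀₀ + π₁C₁₁ + π₀(C₁₀-C₀₀) Q(ln τ/d + d/2) + π₁(C₀₁-C₁₁) Q(d/2 - ln τ/d)`
(`d = (S₁-S₀)/σ`, the risk under the optimal likelihood-ratio test),
(i) `R` is uniquely minimized over `{S₀² ≤ P₀, S₁² ≤ P₁, S₀ < S₁}` at the maximal
separation `(S₀,S₁) = (-√P₀, √P₁)`, and (ii) the minimum value is strictly smaller
than the risks of the two constant (non-informative) decision rules. -/
theorem stmt_7 (σ P0 P1 π0 C00 C01 C10 C11 τ : ℝ) (R : ℝ → ℝ → ℝ)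
    (hσ : 0 < σ) (hP0 : 0 < P0) (hP1 : 0 < P1)
    (hπ : π0 ∈ Set.Ioo (0 : ℝ) 1) (h10 : C10 > C00) (h01 : C01 > C11)
    (hτ : τ = π0 * (C10 - C00) / ((1 - π0) * (C01 - C11)))
    (hR : ∀ S0 S1 : ℝ, R S0 S1 =
      π0 * C00 + (1 - π0) * C11
        + π0 * (C10 - C00) * Q (Real.log τ / ((S1 - S0) / σ) + ((S1 - S0) / σ) / 2)
        + (1 - π0) * (C01 - C11) * Q (((S1 - S0) / σ) / 2 - Real.log τ / ((S1 - S0) / σ))) :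
    (∀ S0 S1 : ℝ, S0 ^ 2 ≤ P0 → S1 ^ 2 ≤ P1 → S0 < S1 →
        R (-Real.sqrt P0) (Real.sqrt P1) ≤ R S0 S1
          ∧ (R (-Real.sqrt P0) (Real.sqrt P1) = R S0 S1 →
              S0 = -Real.sqrt P0 ∧ S1 = Real.sqrt P1))
      ∧ R (-Real.sqrt P0) (Real.sqrt P1)
          < min (π0 * C10 + (1 - π0) * C11) (π0 * C00 + (1 - π0) * C01) := by
  obtain ⟨hπ0, hπ1⟩ := hπ
  have ha : 0 < π0 * (C10 - C00) := mul_pos hπ0 (by linarith)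
  have hb : 0 < (1 - π0) * (C01 - C11) := mul_pos (by linarith) (by linarith)
  have s0 : 0 < Real.sqrt P0 := Real.sqrt_pos.2 hP0
  have s1 : 0 < Real.sqrt P1 := Real.sqrt_pos.2 hP1
  have hD : 0 < (Real.sqrt P1 - -Real.sqrt P0) / σ := div_pos (by linarith) hσ
  have anti := risk_anti _ _ ha hb
  rw [← hτ] at anti
  refine ⟨?_, ?_⟩
  · intro S0 S1 h0 h1 hlt
    have b0 := (abs_le.1 (Real.abs_le_sqrt h0)).1
    have b1 := (abs_le.1 (Real.abs_le_sqrt h1)).2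
    have hd : 0 < (S1 - S0) / σ := div_pos (by linarith) hσ
    have hle : (S1 - S0) / σ ≤ (Real.sqrt P1 - -Real.sqrt P0) / σ := by
      gcongr
    constructor
    · have := anti.antitoneOn hd hD hle
      rw [hR, hR]; linarith
    · intro he
      rw [hR, hR] at he
      have := anti.injOn hD hd (by linarith)
      have : Real.sqrt P1 - -Real.sqrt P0 = S1 - S0 := (div_left_inj' hσ.ne').1 this
      constructor <;> linarith
  · rw [hR]
    have A := risk_lt _ _ _ ha hb hD
    have B := risk_lt _ _ _ hb ha hD
    have e : Real.log ((1 - π0) * (C01 - C11) / (π0 * (C10 - C00))) = -Real.log τ := by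
      rw [hτ, ← Real.log_inv, inv_div]
    rw [← hτ] at A
    generalize (Real.sqrt P1 - -Real.sqrt P0) / σ = D at *
    rw [e, neg_div, neg_add_eq_sub, sub_neg_eq_add, add_comm (D / 2)] at B
    apply lt_min <;> linarith
end

section
/- If k_0 + k_1 > 0 and a(k_0 − k_1) ≤ 0, then f is strictly decreasing on (0,∞). (Hence in this case the minimizer of f over (0, d_max] is d* = d_max, so the Stackelberg leader chooses maximal signal separation.) -/
/-- The transmitter's (normalized) Bayes risk as a function of the normalized signal
separation `d`, when the receiver applies the likelihood-ratio test with threshold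
`τ = eᵃ`: `f(d) = k₀ e^{a/2} Q(a/d + d/2) + k₁ e^{-a/2} Q(d/2 - a/d)`. -/
noncomputable def f (a k0 k1 d : ℝ) : ℝ :=
  k0 * Real.exp (a / 2) * Q (a / d + d / 2) + k1 * Real.exp (-(a / 2)) * Q (d / 2 - a / d)

theorem aux_Q (x : ℝ) :
    HasDerivAt Q (-((1 / Real.sqrt (2 * Real.pi)) * Real.exp (-x ^ 2 / 2))) x := by
  have hint : MeasureTheory.Integrable
      (fun t : ℝ => (1 / Real.sqrt (2 * Real.pi)) * Real.exp (-t ^ 2 / 2)) := by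
    apply MeasureTheory.Integrable.const_mul
    have h := integrable_exp_neg_mul_sq (b := 1 / 2) (by norm_num)
    refine h.congr (Filter.Eventually.of_forall fun t => ?_)
    show Real.exp _ = Real.exp _
    congr 1
    ring
  have hQ : Q = fun y => Q 0 - ∫ t in (0 : ℝ)..y,
      (1 / Real.sqrt (2 * Real.pi)) * Real.exp (-t ^ 2 / 2) := by
    funext y
    have := intervalIntegral.integral_interval_add_Ioi (a := 0) (b := y)
      hint.integrableOn hint.integrableOn
    unfold Q
    linarith
  have hc : Continuous
      (fun t : ℝ => (1 / Real.sqrt (2 * Real.pi)) * Real.exp (-t ^ 2 / 2)) := by fun_prop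
  rw [hQ]
  exact (hc.integral_hasStrictDerivAt 0 x).hasDerivAt.const_sub _

theorem aux_f (a k0 k1 d : ℝ) (hd : 0 < d) :
    HasDerivAt (f a k0 k1)
      (-((1 / Real.sqrt (2 * Real.pi)) * Real.exp (-(a ^ 2 / (2 * d ^ 2)) - d ^ 2 / 8) *
        ((k0 + k1) / 2 - a * (k0 - k1) / d ^ 2))) d := by
  have hd0 := hd.ne'
  have h1 : HasDerivAt (fun d : ℝ => a / d) (-a / d ^ 2) d := by
    have := (hasDerivAt_inv hd0).const_mul a
    simp only [div_eq_mul_inv]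
    exact this.congr_deriv (by ring)
  have h2 : HasDerivAt (fun d : ℝ => d / 2) (1 / 2) d := (hasDerivAt_id d).div_const 2
  have h3 := ((aux_Q (a / d + d / 2)).comp d (h1.add h2)).const_mul (k0 * Real.exp (a / 2))
  have h4 := ((aux_Q (d / 2 - a / d)).comp d (h2.sub h1)).const_mul (k1 * Real.exp (-(a / 2)))
  have e1 : Real.exp (-(a ^ 2 / (2 * d ^ 2)) - d ^ 2 / 8)
      = Real.exp (a / 2) * Real.exp (-(a / d + d / 2) ^ 2 / 2) := by
    rw [← Real.exp_add]; congr 1; field_simp; ring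
  have e2 : Real.exp (-(a ^ 2 / (2 * d ^ 2)) - d ^ 2 / 8)
      = Real.exp (-(a / 2)) * Real.exp (-(d / 2 - a / d) ^ 2 / 2) := by
    rw [← Real.exp_add]; congr 1; field_simp; ring
  refine (h3.add h4).congr_deriv ?_
  generalize 1 / Real.sqrt (2 * Real.pi) = c at *
  generalize Real.exp (-(a ^ 2 / (2 * d ^ 2)) - d ^ 2 / 8) = E at *
  linear_combination (c * k0 * (-a / d ^ 2 + 1 / 2)) * e1 + (c * k1 * (1 / 2 - -a / d ^ 2)) * e2

/-- If `k₀ + k₁ > 0` and `a(k₀ - k₁) ≤ 0`, then `f` is strictly decreasing on `(0, ∞)`. -/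
theorem stmt_8 (a k0 k1 : ℝ) (hsum : 0 < k0 + k1) (hdiff : a * (k0 - k1) ≤ 0) :
    StrictAntiOn (f a k0 k1) (Set.Ioi 0) := by
  apply strictAntiOn_of_deriv_neg (convex_Ioi 0)
  · intro d hd
    exact (aux_f a k0 k1 d hd).continuousAt.continuousWithinAt
  · intro d hd
    rw [interior_Ioi] at hd
    rw [(aux_f a k0 k1 d hd).deriv]
    have hd' : 0 < d := hd
    have : a * (k0 - k1) / d ^ 2 ≤ 0 := div_nonpos_of_nonpos_of_nonneg hdiff (by positivity)
    have h5 : 0 < (k0 + k1) / 2 - a * (k0 - k1) / d ^ 2 := by linarith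
    have : 0 < Real.pi := Real.pi_pos
    rw [neg_lt_zero]
    positivity
end

section
/- Suppose σ > 0, P_0 > P_1 > 0, π_0^t, π_0^r ∈ (0,1), the receiver costs satisfy C_{10}^r > C_{00}^r and C_{01}^r > C_{11}^r, and the transmitter costs satisfy C_{10}^t > C_{00}^t and C_{01}^t < C_{11}^t (i.e., ξ_0 > 0 and ξ_1 < 0). Let S_0* = −√P_0, S_1* = −√P_1, τ = π_0^r(C_{10}^r − C_{00}^r)/(π_1^r(C_{01}^r − C_{11}^r)), and η* = (S_0* + S_1*)/2 + σ² ln(τ)/(S_1* − S_0*). Then the pair ((S_0*, S_1*), [η*, ∞)) is a Nash equilibrium of the binary Gaussian signaling game, and it is informative (S_0* ≠ S_1*). -/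
/-- Gaussian density with standard deviation `σ` (centered at 0). -/
noncomputable def gauss (σ y : ℝ) : ℝ :=
  (1 / (σ * Real.sqrt (2 * Real.pi))) * Real.exp (-y ^ 2 / (2 * σ ^ 2))

/-- Bayes risk of a player with prior `π₀` (and `π₁ = 1 - π₀`) and costs `Cⱼᵢ`
(cost of deciding `Hⱼ` when `Hᵢ` is true), when the signal levels are `S₀, S₁` and
the receiver decides `H₁` iff the observation lies in `Γ₁`. -/
noncomputable def bayesRisk (σ S0 S1 π0 C00 C01 C10 C11 : ℝ) (Γ1 : Set ℝ) : ℝ :=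
  π0 * (C00 * (∫ y in Γ1ᶜ, gauss σ (y - S0)) + C10 * (∫ y in Γ1, gauss σ (y - S0)))
    + (1 - π0) * (C01 * (∫ y in Γ1ᶜ, gauss σ (y - S1)) + C11 * (∫ y in Γ1, gauss σ (y - S1)))

theorem gauss_integrable (σ : ℝ) (hσ : 0 < σ) (S : ℝ) :
    MeasureTheory.Integrable (fun y => gauss σ (y - S)) := by
  have h1 : MeasureTheory.Integrable (fun y => gauss σ y) := by
    unfold gauss
    apply MeasureTheory.Integrable.const_mul
    have h := integrable_exp_neg_mul_sq (b := 1 / (2 * σ ^ 2)) (by positivity)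
    refine h.congr (Filter.Eventually.of_forall fun y => ?_)
    show Real.exp _ = Real.exp _
    congr 1
    ring
  exact h1.comp_sub_right S

theorem gauss_nonneg (σ : ℝ) (hσ : 0 < σ) (y : ℝ) : 0 ≤ gauss σ y := by
  unfold gauss; positivity

theorem gauss_tail_mono (σ : ℝ) (hσ : 0 < σ) (η S S' : ℝ) (h : S ≤ S') :
    (∫ y in Set.Ici η, gauss σ (y - S)) ≤ ∫ y in Set.Ici η, gauss σ (y - S') := by
  have key : ∀ T : ℝ, (∫ y in Set.Ici η, gauss σ (y - T))
      = ∫ y in Set.Ici (η - T), gauss σ y := by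
    intro T
    rw [← MeasureTheory.integral_indicator measurableSet_Ici,
      ← MeasureTheory.integral_indicator measurableSet_Ici,
      ← MeasureTheory.integral_sub_right_eq_self
        ((Set.Ici (η - T)).indicator fun y => gauss σ y) T]
    congr 1
    funext y
    by_cases hy : η ≤ y
    · rw [Set.indicator_of_mem (by exact hy), Set.indicator_of_mem (by simpa using hy)]
    · rw [Set.indicator_of_notMem (by simpa using hy),
        Set.indicator_of_notMem (by simpa using hy)]
  rw [key, key]
  apply MeasureTheory.setIntegral_mono_set
  · have := gauss_integrable σ hσ 0
    simpa using this.integrableOn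
  · exact Filter.Eventually.of_forall fun y => gauss_nonneg σ hσ y
  · exact (Set.Ici_subset_Ici.mpr (by linarith)).eventuallyLE

theorem bayesRisk_eq (σ S0 S1 π0 C00 C01 C10 C11 : ℝ) (hσ : 0 < σ) (Γ1 : Set ℝ)
    (hΓ : MeasurableSet Γ1) :
    bayesRisk σ S0 S1 π0 C00 C01 C10 C11 Γ1 =
      (π0 * C00 + (1 - π0) * C01) * (∫ y, gauss σ y)
      + (π0 * (C10 - C00) * (∫ y in Γ1, gauss σ (y - S0))
        - (1 - π0) * (C01 - C11) * (∫ y in Γ1, gauss σ (y - S1))) := by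
  have key : ∀ T : ℝ, (∫ y in Γ1ᶜ, gauss σ (y - T))
      = (∫ y, gauss σ y) - ∫ y in Γ1, gauss σ (y - T) := by
    intro T
    have h := MeasureTheory.integral_add_compl hΓ (gauss_integrable σ hσ T)
    have h2 := MeasureTheory.integral_sub_right_eq_self (μ := MeasureTheory.volume) (fun y => gauss σ y) T
    linarith
  unfold bayesRisk
  rw [key, key]
  ring

theorem lr_le (σ S0 S1 a b y : ℝ) (hσ : 0 < σ) (ha : 0 < a) (hb : 0 < b) (hS : S0 < S1) :
    ((S0 + S1) / 2 + σ ^ 2 * Real.log (a / b) / (S1 - S0) ≤ y →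
      a * gauss σ (y - S0) - b * gauss σ (y - S1) ≤ 0) ∧
    (y ≤ (S0 + S1) / 2 + σ ^ 2 * Real.log (a / b) / (S1 - S0) →
      0 ≤ a * gauss σ (y - S0) - b * gauss σ (y - S1)) := by
  have hd : 0 < S1 - S0 := by linarith
  have e : ∀ c : ℝ, 0 < c → ∀ S, c * gauss σ (y - S) = (1 / (σ * Real.sqrt (2 * Real.pi))) *
      Real.exp (Real.log c + -(y - S) ^ 2 / (2 * σ ^ 2)) := by
    intro c hc S
    rw [Real.exp_add, Real.exp_log hc]; unfold gauss; ring
  have hk : 0 < 1 / (σ * Real.sqrt (2 * Real.pi)) := by positivity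
  rw [e a ha, e b hb, Real.log_div ha.ne' hb.ne']
  have id : (Real.log b + -(y - S1) ^ 2 / (2 * σ ^ 2))
      - (Real.log a + -(y - S0) ^ 2 / (2 * σ ^ 2))
      = (y - ((S0 + S1) / 2 + σ ^ 2 * (Real.log a - Real.log b) / (S1 - S0)))
        * ((S1 - S0) / σ ^ 2) := by
    field_simp
    ring
  have hq : 0 < (S1 - S0) / σ ^ 2 := by positivity
  constructor
  · intro h
    have h2 := mul_nonneg (sub_nonneg.mpr h) hq.le
    rw [← id] at h2
    have := mul_le_mul_of_nonneg_left (Real.exp_le_exp.mpr (sub_nonneg.mp h2)) hk.le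
    linarith
  · intro h
    have h2 := mul_nonpos_of_nonpos_of_nonneg (sub_nonpos.mpr h) hq.le
    rw [← id] at h2
    have := mul_le_mul_of_nonneg_left (Real.exp_le_exp.mpr (sub_nonpos.mp h2)) hk.le
    linarith

/-- When `ξ₀ > 0`, `ξ₁ < 0` and `P₀ > P₁ > 0`, the pair `((-√P₀, -√P₁), [η*, ∞))`
with `η* = (S₀*+S₁*)/2 + σ² ln τ/(S₁*-S₀*)`, `τ = π₀ʳ(C₁₀ʳ-C₀₀ʳ)/(π₁ʳ(C₀₁ʳ-C₁₁ʳ))`,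
is an informative Nash equilibrium of the binary Gaussian signaling game. -/
theorem stmt_17 (σ P0 P1 π0t π0r C00t C01t C10t C11t C00r C01r C10r C11r : ℝ)
    (hσ : 0 < σ) (hP1 : 0 < P1) (hP10 : P1 < P0)
    (hπt : π0t ∈ Set.Ioo (0 : ℝ) 1) (hπr : π0r ∈ Set.Ioo (0 : ℝ) 1)
    (hr10 : C10r > C00r) (hr01 : C01r > C11r)
    (ht10 : C10t > C00t) (ht01 : C01t < C11t)
    (S0s S1s τ ηs : ℝ)
    (hS0s : S0s = -Real.sqrt P0) (hS1s : S1s = -Real.sqrt P1)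
    (hτ : τ = π0r * (C10r - C00r) / ((1 - π0r) * (C01r - C11r)))
    (hηs : ηs = (S0s + S1s) / 2 + σ ^ 2 * Real.log τ / (S1s - S0s)) :
    (∀ S0 S1 : ℝ, S0 ^ 2 ≤ P0 → S1 ^ 2 ≤ P1 →
        bayesRisk σ S0s S1s π0t C00t C01t C10t C11t (Set.Ici ηs)
          ≤ bayesRisk σ S0 S1 π0t C00t C01t C10t C11t (Set.Ici ηs))
      ∧ (∀ Γ1 : Set ℝ, MeasurableSet Γ1 →
          bayesRisk σ S0s S1s π0r C00r C01r C10r C11r (Set.Ici ηs)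
            ≤ bayesRisk σ S0s S1s π0r C00r C01r C10r C11r Γ1)
      ∧ S0s ≠ S1s := by
  obtain ⟨ht0, ht1⟩ := hπt
  obtain ⟨hr0, hr1⟩ := hπr
  have hlt : S0s < S1s := by
    rw [hS0s, hS1s]
    exact neg_lt_neg (Real.sqrt_lt_sqrt hP1.le hP10)
  refine ⟨?_, ?_, hlt.ne⟩
  · intro S0 S1 h0 h1
    rw [bayesRisk_eq _ _ _ _ _ _ _ _ hσ _ measurableSet_Ici,
      bayesRisk_eq _ _ _ _ _ _ _ _ hσ _ measurableSet_Ici]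
    have a0 : S0s ≤ S0 := by rw [hS0s]; exact (Real.sq_le (by linarith)).mp h0 |>.1
    have a1 : S1s ≤ S1 := by rw [hS1s]; exact (Real.sq_le (by linarith)).mp h1 |>.1
    have b0 := mul_le_mul_of_nonneg_left (gauss_tail_mono σ hσ ηs S0s S0 a0)
      (mul_nonneg ht0.le (sub_nonneg.mpr ht10.le))
    have b1 := mul_le_mul_of_nonneg_left (gauss_tail_mono σ hσ ηs S1s S1 a1)
      (mul_nonneg (sub_nonneg.mpr ht1.le) (sub_nonneg.mpr ht01.le))
    linarith
  · intro Γ1 hΓ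
    rw [bayesRisk_eq _ _ _ _ _ _ _ _ hσ _ measurableSet_Ici,
      bayesRisk_eq _ _ _ _ _ _ _ _ hσ _ hΓ]
    have ha : 0 < π0r * (C10r - C00r) := mul_pos hr0 (sub_pos.mpr hr10)
    have hb : 0 < (1 - π0r) * (C01r - C11r) := mul_pos (sub_pos.mpr hr1) (sub_pos.mpr hr01)
    have hl := fun y => lr_le σ S0s S1s _ _ y hσ ha hb hlt
    rw [← hτ, ← hηs] at hl
    set a := π0r * (C10r - C00r)
    set b := (1 - π0r) * (C01r - C11r)
    have i0 := (gauss_integrable σ hσ S0s).const_mul a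
    have i1 := (gauss_integrable σ hσ S1s).const_mul b
    have e : ∀ A : Set ℝ, a * (∫ y in A, gauss σ (y - S0s)) - b * (∫ y in A, gauss σ (y - S1s))
        = ∫ y in A, (a * gauss σ (y - S0s) - b * gauss σ (y - S1s)) := by
      intro A
      rw [MeasureTheory.integral_sub i0.integrableOn i1.integrableOn,
        MeasureTheory.integral_const_mul, MeasureTheory.integral_const_mul]
    rw [e, e]
    have i2 := i0.sub i1
    have : (∫ y in Set.Ici ηs, (a * gauss σ (y - S0s) - b * gauss σ (y - S1s)))
        ≤ ∫ y in Γ1, (a * gauss σ (y - S0s) - b * gauss σ (y - S1s)) := by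
      rw [← MeasureTheory.integral_indicator measurableSet_Ici,
        ← MeasureTheory.integral_indicator hΓ]
      apply MeasureTheory.integral_mono (i2.indicator measurableSet_Ici) (i2.indicator hΓ)
      intro y
      by_cases hy : ηs ≤ y
      · have := (hl y).1 hy
        by_cases hg : y ∈ Γ1 <;> simp [Set.indicator, hy, hg] <;> linarith
      · have := (hl y).2 (not_le.mp hy).le
        by_cases hg : y ∈ Γ1 <;> simp [Set.indicator, hy, hg] <;> linarith
    linarith
end
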